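/- Let k be an algebraically closed field of characteristic p > 0, and let r, s be integers with 1 ≤ r, s ≤ p−1. Set c = min(r, s, p−r, p−s) and m = (r·s − c·|r−s| − c²)/p. Then there is an isomorphism of representations of C_p over k: L_r ⊗ L_s ≅ (⨁_{i=1}^{c} L_{|r−s|+2i−1}) ⊕ (L_p)^{⊕ m}. -/

import Mathlib

/-- The nilpotent single Jordan block of size `s` (ones on the superdiagonal). -/
def jordanN (k : Type) [Field k] (s : ℕ) : Matrix (Fin s) (Fin s) k :=
  Matrix.of fun i j => if (i : ℕ) + 1 = (j : ℕ) then 1 else 0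

/-- The generator `σ` of `C_p` acting on `L_s = k^s` as the unipotent Jordan block `1 + N`. -/
def sigmaL (k : Type) [Field k] (s : ℕ) : (Fin s → k) →ₗ[k] (Fin s → k) :=
  ((1 : Matrix (Fin s) (Fin s) k) + jordanN k s).mulVecLin

/-!
Write `σ ⊗ σ - 1 = A + B` with `A = N ⊗ 1` and `B = σ ⊗ N`. These commute, `A ^ r = B ^ s = 0`, and
they make `L_r ⊗ L_s` into the graded ring `k[x, y] / (x ^ r, y ^ s)`, on which `A + B` acts as
multiplication by the linear form `x + y`. It suffices to find Jordan strings of `A + B` of the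
right lengths whose end vectors are homogeneous of different degrees.

Let `r ≤ s`. After dehomogenizing, `x + y` becomes `X + 1`. Counting dimensions yields a nonzero
`f` of degree at most `r - 1 - j` such that `(X + 1) ^ (s - r + 2 * j + 1) * f` vanishes in the
quotient, whereas `(X + 1) ^ (s - r + 2 * j) * f` cannot vanish as long as `s + j ≤ p`: this gives
a string of length `s - r + 2 * j + 1` ending in degree `s - 1 + j`. Moreover `(A + B) ^ p = A ^ p
+ B ^ p = 0`, and the string of length `p` that starts at `x ^ i` ends in degree `i + (p - 1)`,
with nonzero end vector because the binomial coefficients of `p - 1` are nonzero modulo `p`.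
-/

open Polynomial Finset
open scoped Nat Matrix TensorProduct

section Polynomial

variable {R : Type*}

theorem cast_factorial_ne_zero [AddMonoidWithOne R] {p : ℕ} [Fact p.Prime] [CharP R p]
    {n : ℕ} (hn : n < p) : ((n)! : R) ≠ 0 := by
  rw [Ne, CharP.cast_eq_zero_iff R p, (Fact.out : p.Prime).dvd_factorial]
  exact hn.not_ge

theorem cast_descFactorial_ne_zero [Semiring R] {n q : ℕ} (hn : ((n)! : R) ≠ 0)
    (hqn : q ≤ n) : (n.descFactorial q : R) ≠ 0 := by
  have hdvd : n.descFactorial q ∣ (n)! := Dvd.intro_left _ (Nat.factorial_mul_descFactorial hqn)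
  exact ne_zero_of_dvd_ne_zero hn (Nat.cast_dvd_cast hdvd)

theorem natDegree_lt_of_iterate_derivative_eq_zero [Semiring R] [NoZeroDivisors R] {g : R[X]}
    {q : ℕ} (hfact : ((g.natDegree)! : R) ≠ 0) (hg : g ≠ 0) (hder : derivative^[q] g = 0) :
    g.natDegree < q := by
  by_contra! hq
  have hcoeff := coeff_iterate_derivative g (k := q) (g.natDegree - q)
  rw [hder, coeff_zero, Nat.sub_add_cancel hq, coeff_natDegree, nsmul_eq_mul] at hcoeff
  exact mul_ne_zero (cast_descFactorial_ne_zero hfact hq) (leadingCoeff_ne_zero.mpr hg)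
    hcoeff.symm

-- The `q`-th derivative of `(X + 1) ^ n * f` is divisible by the coprime polynomials `X ^ (i + 1)`
-- and `(X + 1) ^ (n - q)`, hence vanishes for degree reasons.
theorem eq_zero_of_coeff_X_add_one_pow_mul_eq_zero [CommRing R] [IsDomain R] {n q i : ℕ}
    (hfact : ((n + i)! : R) ≠ 0) (hqn : q ≤ n) {f : R[X]} (hf : f.natDegree ≤ i)
    (hcoeff : ∀ j ≤ i, ((X + 1) ^ n * f).coeff (j + q) = 0) : f = 0 := by
  by_contra hf0
  set g : R[X] := (X + 1) ^ n * f with hg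
  have hmonic : ((X + 1 : R[X]) ^ n).Monic := (monic_X_add_C 1).pow n
  have hdeg : g.natDegree = n + f.natDegree := by
    rw [hg, hmonic.natDegree_mul' hf0, ← C_1, natDegree_pow_X_add_C]
  have hX : X ^ (i + 1) ∣ derivative^[q] g := X_pow_dvd_iff.mpr fun j hj => by
    rw [coeff_iterate_derivative, hcoeff j (by omega), smul_zero]
  have hX1 : (X + 1) ^ (n - q) ∣ derivative^[q] g :=
    pow_sub_dvd_iterate_derivative_of_pow_dvd q (Dvd.intro _ rfl)
  have hcoprime : IsCoprime (X ^ (i + 1) : R[X]) ((X + 1) ^ (n - q)) :=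
    IsCoprime.pow ⟨-1, 1, by ring⟩
  have hder : derivative^[q] g = 0 := by
    refine eq_zero_of_dvd_of_natDegree_lt (hcoprime.mul_dvd hX hX1) ?_
    rw [← C_1, (monic_X_pow (i + 1)).natDegree_mul ((monic_X_add_C 1).pow (n - q)),
      natDegree_X_pow, natDegree_pow_X_add_C]
    have := natDegree_iterate_derivative g q
    omega
  have hfact_deg : ((g.natDegree)! : R) ≠ 0 :=
    ne_zero_of_dvd_ne_zero hfact (Nat.cast_dvd_cast (Nat.factorial_dvd_factorial (by omega)))
  have := natDegree_lt_of_iterate_derivative_eq_zero hfact_deg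
    (mul_ne_zero hmonic.ne_zero hf0) hder
  omega

theorem exists_ne_zero_coeff_mul_eq_zero {k : Type*} [Field k] (g : k[X]) (i q : ℕ) :
    ∃ f : k[X], f ≠ 0 ∧ f.natDegree ≤ i ∧ ∀ j < i, (g * f).coeff (j + q) = 0 := by
  let Φ : degreeLT k (i + 1) →ₗ[k] (Fin i → k) := LinearMap.pi fun j =>
    lcoeff k (j + q) ∘ₗ LinearMap.mulLeft k g ∘ₗ (degreeLT k (i + 1)).subtype
  have hker : LinearMap.ker Φ ≠ ⊥ := LinearMap.ker_ne_bot_of_finrank_lt <| by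
    rw [(degreeLTEquiv k (i + 1)).finrank_eq, Module.finrank_fin_fun, Module.finrank_fin_fun]
    exact i.lt_succ_self
  obtain ⟨⟨f, hfdeg⟩, hΦf, hf⟩ := Submodule.exists_mem_ne_zero_of_ne_bot hker
  have hf0 : f ≠ 0 := fun h => hf (Subtype.ext h)
  exact ⟨f, hf0, Nat.le_of_lt_succ ((natDegree_lt_iff_degree_lt hf0).mpr (mem_degreeLT.mp hfdeg)),
    fun j hj => congrFun hΦf ⟨j, hj⟩⟩

end Polynomial

section JordanBlock

variable (k : Type) [Field k] (s : ℕ)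

theorem sigmaL_eq_one_add : sigmaL k s = 1 + (jordanN k s).mulVecLin := by
  rw [sigmaL, Matrix.mulVecLin_add, Matrix.mulVecLin_one]
  rfl

theorem jordanN_pow_apply (j : ℕ) (a b : Fin s) :
    (jordanN k s ^ j) a b = if (a : ℕ) + j = b then 1 else 0 := by
  induction j generalizing a with
  | zero => simp [Matrix.one_apply, Fin.ext_iff]
  | succ j ih =>
    have hstep : (jordanN k s ^ (j + 1)) a b =
        ∑ x : Fin s, if (a : ℕ) + 1 = x then if (x : ℕ) + j = b then 1 else 0 else 0 := by
      simp only [pow_succ', Matrix.mul_apply, ih]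
      simp only [jordanN, Matrix.of_apply, ite_mul, one_mul, zero_mul]
    rw [hstep]
    split_ifs with hab
    · rw [sum_eq_single ⟨a + 1, by omega⟩ (fun x _ hx => if_neg fun h => hx (Fin.ext h.symm))
        (by simp), if_pos rfl, if_pos (by dsimp only; omega)]
    · refine sum_eq_zero fun x _ => ?_
      split_ifs <;> first | rfl | omega

theorem mulVecLin_jordanN_pow (j : ℕ) :
    (jordanN k s).mulVecLin ^ j = (jordanN k s ^ j).mulVecLin := by
  simp only [← Matrix.toLin'_apply', Matrix.toLin'_pow]

theorem mulVecLin_jordanN_pow_self : (jordanN k s).mulVecLin ^ s = 0 := by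
  have hpow : jordanN k s ^ s = 0 := by
    ext a b
    rw [jordanN_pow_apply, if_neg (by omega), Matrix.zero_apply]
  rw [mulVecLin_jordanN_pow, hpow, Matrix.mulVecLin_zero]

theorem exists_mulVecLin_jordanN_pow_apply_ne_zero (hs : 0 < s) :
    ∃ u, ((jordanN k s).mulVecLin ^ (s - 1)) u ≠ 0 := by
  refine ⟨Pi.single ⟨s - 1, by omega⟩ 1, fun h => ?_⟩
  have hentry := congrFun h ⟨0, hs⟩
  rw [mulVecLin_jordanN_pow, Matrix.mulVecLin_apply, Matrix.mulVec_single_one, Matrix.col_apply,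
    jordanN_pow_apply, if_pos (Nat.zero_add _)] at hentry
  exact one_ne_zero hentry

end JordanBlock

section JordanString

variable {R M : Type*} [Ring R] [AddCommGroup M] [Module R M]

theorem linearIndependent_pow_apply {ι : Type*} [Finite ι] (N : Module.End R M) (n : ι → ℕ)
    (v : ι → M) (hzero : ∀ i, (N ^ n i) (v i) = 0)
    (hli : LinearIndependent R fun i => (N ^ (n i - 1)) (v i)) :
    LinearIndependent R fun x : Σ i, Fin (n i) => (N ^ (x.2 : ℕ)) (v x.1) := by
  classical
  have := Fintype.ofFinite ι
  rw [Fintype.linearIndependent_iff]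
  intro a ha
  by_contra! hne
  obtain ⟨y, hy, hmax⟩ : ∃ y, a y ≠ 0 ∧ ∀ x, a x ≠ 0 → n x.1 - 1 - x.2 ≤ n y.1 - 1 - y.2 := by
    simpa using exists_max_image (univ.filter (a · ≠ 0)) (fun x => n x.1 - 1 - x.2)
      (by simpa [filter_nonempty_iff] using hne)
  -- After applying `N ^ L`, only ends of strings survive in the relation.
  set L := n y.1 - 1 - y.2
  have hterm (i : ι) (j : Fin (n i)) : (N ^ L) (a ⟨i, j⟩ • (N ^ (j : ℕ)) (v i)) =
      (if L + j + 1 = n i then a ⟨i, j⟩ else 0) • (N ^ (n i - 1)) (v i) := by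
    rw [map_smul, ← Module.End.mul_apply, ← pow_add]
    rcases lt_trichotomy (L + j + 1) (n i) with hlt | heq | hgt
    · have : a ⟨i, j⟩ = 0 := by
        by_contra h
        have := hmax ⟨i, j⟩ h
        dsimp only at this
        omega
      simp [this]
    · rw [if_pos heq, show L + (j : ℕ) = n i - 1 by omega]
    · rw [if_neg hgt.ne', zero_smul, Module.End.pow_map_zero_of_le (by omega) (hzero i), smul_zero]
  have hsum := congrArg (N ^ L) ha
  simp only [Fintype.sum_sigma, map_sum, map_zero, hterm, ← sum_smul] at hsum
  have hcoeff := Fintype.linearIndependent_iff.mp hli _ hsum y.1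
  rw [sum_eq_single y.2 (fun j _ hj => if_neg fun h => hj (by ext; omega)) (by simp),
    if_pos (by omega)] at hcoeff
  exact hy hcoeff

end JordanString

section JordanForm

variable {k : Type} {V : Type*} [Field k] [AddCommGroup V] [Module k V]

/-- The map from the Jordan block of size `n` to `V` that sends the last basis vector to `v` and,
when `N ^ n` kills `v`, intertwines the block with `N`. -/
def jordanString (N : Module.End k V) (v : V) (n : ℕ) : (Fin n → k) →ₗ[k] V :=
  Fintype.linearCombination k fun j : Fin n => (N ^ (j.rev : ℕ)) v

theorem jordanString_mulVec {N : Module.End k V} {v : V} {n : ℕ} (hzero : (N ^ n) v = 0)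
    (f : Fin n → k) : jordanString N v n (jordanN k n *ᵥ f) = N (jordanString N v n f) := by
  suffices h : jordanString N v n ∘ₗ (jordanN k n).mulVecLin = N ∘ₗ jordanString N v n from
    LinearMap.congr_fun h f
  refine (Pi.basisFun k (Fin n)).ext fun j => ?_
  have hleft : jordanString N v n (jordanN k n *ᵥ Pi.single j 1) =
      ∑ a : Fin n, (if (a : ℕ) + 1 = j then (1 : k) else 0) • (N ^ (a.rev : ℕ)) v := by
    rw [Matrix.mulVec_single_one]
    rfl
  have hright : N (jordanString N v n (Pi.single j 1)) = (N ^ (n - j : ℕ)) v := by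
    rw [jordanString, Fintype.linearCombination_apply_single, one_smul, ← Module.End.mul_apply,
      ← pow_succ', Fin.val_rev, show n - (j + 1) + 1 = n - (j : ℕ) by omega]
  simp only [LinearMap.comp_apply, Pi.basisFun_apply, Matrix.mulVecLin_apply, hleft, hright]
  obtain ⟨_ | j, hj⟩ := j
  · simp [hzero]
  · rw [sum_eq_single ⟨j, by omega⟩ (fun a _ ha => ?_) (by simp)]
    · simp
    · rw [if_neg fun h => ha (Fin.ext (Nat.succ_injective h)), zero_smul]

theorem jordanString_sigmaL {N : Module.End k V} {v : V} {n : ℕ} (hzero : (N ^ n) v = 0)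
    (f : Fin n → k) :
    jordanString N v n (sigmaL k n f) = jordanString N v n f + N (jordanString N v n f) := by
  rw [sigmaL_eq_one_add, LinearMap.add_apply, Module.End.one_apply, map_add,
    Matrix.mulVecLin_apply, jordanString_mulVec hzero]

theorem exists_equiv_pi_sigmaL {ι : Type*} [Fintype ι] [FiniteDimensional k V]
    (N : Module.End k V) (n : ι → ℕ) (v : ι → V) (hzero : ∀ i, (N ^ n i) (v i) = 0)
    (hli : LinearIndependent k fun i => (N ^ (n i - 1)) (v i))
    (hdim : Module.finrank k V = ∑ i, n i) :
    ∃ e : V ≃ₗ[k] (∀ i, Fin (n i) → k), ∀ x i, e (x + N x) i = sigmaL k (n i) (e x i) := by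
  let T : (∀ i, Fin (n i) → k) →ₗ[k] V :=
    ∑ i, jordanString N (v i) (n i) ∘ₗ LinearMap.proj i
  have hT (f : ∀ i, Fin (n i) → k) : T f = ∑ i, jordanString N (v i) (n i) (f i) := by
    simp [T]
  have hli' : LinearIndependent k fun x : Σ i, Fin (n i) => (N ^ (x.2.rev : ℕ)) (v x.1) :=
    (linearIndependent_pow_apply N n v hzero hli).comp (Sigma.map id fun _ => Fin.rev)
      (Function.Injective.sigma_map Function.injective_id fun _ => Fin.rev_injective)
  have hinj : Function.Injective T := by
    rw [injective_iff_map_eq_zero]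
    intro f hf
    have hsum : ∑ x : Σ i, Fin (n i), f x.1 x.2 • (N ^ (x.2.rev : ℕ)) (v x.1) = 0 := by
      rw [Fintype.sum_sigma, ← hf, hT]
      rfl
    ext i j
    exact Fintype.linearIndependent_iff.mp hli' (fun x => f x.1 x.2) hsum ⟨i, j⟩
  let e := LinearEquiv.ofInjectiveOfFinrankEq T hinj <| by
    rw [hdim, Module.finrank_pi_fintype]
    exact sum_congr rfl fun i _ => Module.finrank_fin_fun k
  have hsigma (f : ∀ i, Fin (n i) → k) : e (fun i => sigmaL k (n i) (f i)) = e f + N (e f) := by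
    change T _ = T f + N (T f)
    simp only [hT, jordanString_sigmaL (hzero _), sum_add_distrib, map_sum]
  have hsymm (x : V) : e.symm (x + N x) = fun i => sigmaL k (n i) (e.symm x i) := by
    rw [e.symm_apply_eq, hsigma, e.apply_symm_apply]
  exact ⟨e.symm, fun x i => congrFun (hsymm x) i⟩

end JordanForm

/-- The linear map `f ↦ F(A, B) v`, where `F` is the homogenization of degree `D` of the
one-variable polynomial `f`. Its range is the degree `D` part of the space generated by `v`;
coefficients of `f` of degree larger than `D` are ignored. -/
noncomputable def homogEval {R M : Type*} [CommRing R] [AddCommGroup M] [Module R M]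
    (A B : Module.End R M) (v : M) (D : ℕ) : R[X] →ₗ[R] M :=
  ∑ ab ∈ antidiagonal D, (lcoeff R ab.1).smulRight ((A ^ ab.1 * B ^ ab.2) v)

section Homogeneous

variable {R M : Type*} [CommRing R] [AddCommGroup M] [Module R M] {A B : Module.End R M}

theorem homogEval_apply (v : M) (D : ℕ) (f : R[X]) : homogEval A B v D f =
    ∑ ab ∈ antidiagonal D, f.coeff ab.1 • (A ^ ab.1 * B ^ ab.2) v := by
  simp [homogEval]

theorem add_homogEval (hAB : Commute A B) (v : M) {D : ℕ} {f : R[X]} (hf : f.natDegree ≤ D) :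
    (A + B) (homogEval A B v D f) = homogEval A B v (D + 1) ((X + 1) * f) := by
  have hB (a b : ℕ) : B * (A ^ a * B ^ b) = A ^ a * B ^ (b + 1) := by
    rw [← mul_assoc, (hAB.symm.pow_right a).eq, mul_assoc, ← pow_succ']
  have hA (a b : ℕ) : A * (A ^ a * B ^ b) = A ^ (a + 1) * B ^ b := by
    rw [← mul_assoc, ← pow_succ']
  have hcoeff : f.coeff (D + 1) = 0 := coeff_eq_zero_of_natDegree_lt (Nat.lt_succ_of_le hf)
  rw [add_mul, one_mul, map_add, LinearMap.add_apply]
  simp only [homogEval_apply, map_sum, map_smul, ← Module.End.mul_apply, hA, hB]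
  congr 1
  · simp [Nat.sum_antidiagonal_succ]
  · simp [Nat.sum_antidiagonal_succ', hcoeff]

theorem add_pow_homogEval (hAB : Commute A B) (v : M) {D : ℕ} {f : R[X]} (hf : f.natDegree ≤ D)
    (n : ℕ) : ((A + B) ^ n) (homogEval A B v D f) =
      homogEval A B v (n + D) ((X + 1) ^ n * f) := by
  induction n with
  | zero => simp
  | succ n ih =>
    have hdeg : ((X + 1) ^ n * f).natDegree ≤ n + D :=
      natDegree_mul_le_of_le (by compute_degree) hf
    rw [pow_succ', Module.End.mul_apply, ih, add_homogEval hAB v hdeg, ← mul_assoc, ← pow_succ',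
      Nat.add_right_comm]

end Homogeneous

/-- The vector `v` generates `V` under the commuting operators `A` and `B`, with annihilator
exactly `(A ^ r, B ^ s)`: evaluation at `v` identifies `V` with `k[x, y] / (x ^ r, y ^ s)`.
Generation is encoded by the dimension of `V` and the nonvanishing of the socle vector. -/
structure IsBicyclicVector {k V : Type*} [Field k] [AddCommGroup V] [Module k V]
    (A B : Module.End k V) (v : V) (r s : ℕ) : Prop where
  commute : Commute A B
  pow_left : A ^ r = 0
  pow_right : B ^ s = 0
  socle_ne_zero : (A ^ (r - 1) * B ^ (s - 1)) v ≠ 0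
  finrank_eq : Module.finrank k V = r * s

namespace IsBicyclicVector

variable {k V : Type*} [Field k] [AddCommGroup V] [Module k V] {A B : Module.End k V} {v : V}
  {r s : ℕ}

theorem left_pos (h : IsBicyclicVector A B v r s) : 0 < r := by
  by_contra! hr
  have hone : (1 : Module.End k V) = 0 := by simpa [Nat.le_zero.mp hr] using h.pow_left
  exact h.socle_ne_zero (LinearMap.congr_fun hone _)

theorem symm (h : IsBicyclicVector A B v r s) : IsBicyclicVector B A v s r where
  commute := h.commute.symm
  pow_left := h.pow_right
  pow_right := h.pow_left
  socle_ne_zero := by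
    rw [← (h.commute.pow_pow _ _).eq]
    exact h.socle_ne_zero
  finrank_eq := by rw [h.finrank_eq, mul_comm]

theorem monomial_eq_zero (h : IsBicyclicVector A B v r s) {a b : ℕ} (hab : r ≤ a ∨ s ≤ b) :
    A ^ a * B ^ b = 0 := by
  rcases hab with ha | hb
  · rw [pow_eq_zero_of_le ha h.pow_left, zero_mul]
  · rw [pow_eq_zero_of_le hb h.pow_right, mul_zero]

theorem linearIndependent_monomial (h : IsBicyclicVector A B v r s) :
    LinearIndependent k fun x : Fin r × Fin s => (A ^ (x.1 : ℕ) * B ^ (x.2 : ℕ)) v := by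
  have hcolumn : LinearIndependent k fun b : Fin s => (B ^ (b : ℕ)) ((A ^ (r - 1)) v) := by
    refine (linearIndependent_pow_apply B (fun _ : Unit => s) (fun _ => (A ^ (r - 1)) v)
      (fun _ => by rw [h.pow_right, LinearMap.zero_apply]) (.of_subsingleton () ?_)).comp
      (fun b : Fin s => ⟨(), b⟩) (fun _ _ hb => by simpa using hb)
    rw [← Module.End.mul_apply, ← (h.commute.pow_pow _ _).eq]
    exact h.socle_ne_zero
  refine (linearIndependent_pow_apply A (fun _ : Fin s => r) (fun b => (B ^ (b : ℕ)) v)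
    (fun _ => by rw [h.pow_left, LinearMap.zero_apply]) ?_).comp
    (fun x : Fin r × Fin s => ⟨x.2, x.1⟩) (fun x y hxy => ?_)
  · simpa only [← Module.End.mul_apply, (h.commute.pow_pow _ _).eq] using hcolumn
  · simp only [Sigma.mk.injEq, heq_eq_eq] at hxy
    exact Prod.ext hxy.2 hxy.1

theorem homogEval_eq_sum (h : IsBicyclicVector A B v r s) (D : ℕ) (f : k[X]) :
    homogEval A B v D f = ∑ x : Fin r × Fin s,
      (if (x.1 + x.2 : ℕ) = D then f.coeff x.1 else 0) • (A ^ (x.1 : ℕ) * B ^ (x.2 : ℕ)) v := by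
  simp only [homogEval_apply, ite_smul, zero_smul, ← sum_filter]
  symm
  refine sum_of_injOn (fun x : Fin r × Fin s => ((x.1 : ℕ), (x.2 : ℕ))) ?_ ?_ ?_ ?_
  · intro x _ y _ hxy
    simp only [Prod.mk.injEq] at hxy
    exact Prod.ext (Fin.ext hxy.1) (Fin.ext hxy.2)
  · intro x hx
    simpa using hx
  · rintro ⟨a, b⟩ hab hx
    have hout : r ≤ a ∨ s ≤ b := by
      by_contra! hlt
      refine hx ⟨(⟨a, hlt.1⟩, ⟨b, hlt.2⟩), ?_, rfl⟩
      simpa using hab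
    simp only [h.monomial_eq_zero hout, LinearMap.zero_apply, smul_zero]
  · intro x _
    rfl

theorem homogEval_eq_zero (h : IsBicyclicVector A B v r s) {D : ℕ} {f : k[X]}
    (hf : ∀ a < r, a ≤ D → D < a + s → f.coeff a = 0) : homogEval A B v D f = 0 := by
  rw [h.homogEval_eq_sum]
  refine sum_eq_zero fun x _ => ?_
  split_ifs with hx
  · rw [hf x.1 x.1.isLt (by omega) (by omega), zero_smul]
  · rw [zero_smul]

theorem linearIndependent_of_mem_range_homogEval (h : IsBicyclicVector A B v r s) {ι : Type*}
    {D : ι → ℕ} (hD : Function.Injective D) {u : ι → V}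
    (hu : ∀ i, u i ∈ LinearMap.range (homogEval A B v (D i))) (hu0 : ∀ i, u i ≠ 0) :
    LinearIndependent k u := by
  classical
  choose f hf using hu
  rw [linearIndependent_iff']
  intro t g hg i hi
  simp only [← hf, h.homogEval_eq_sum, smul_sum, smul_smul] at hg
  rw [sum_comm] at hg
  simp only [← sum_smul] at hg
  have hcoeff := Fintype.linearIndependent_iff.mp h.linearIndependent_monomial _ hg
  contrapose! hu0
  refine ⟨i, (hf i).symm.trans (h.homogEval_eq_zero fun a ha haD hDa => ?_)⟩
  have hgf : g i * (f i).coeff a = 0 := by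
    simpa [haD, hD.eq_iff, hi] using hcoeff (⟨a, ha⟩, ⟨D i - a, by omega⟩)
  exact (mul_eq_zero.mp hgf).resolve_left hu0

theorem coeff_eq_zero_of_homogEval_eq_zero (h : IsBicyclicVector A B v r s) {D : ℕ} {f : k[X]}
    (hf : homogEval A B v D f = 0) {a : ℕ} (ha : a < r) (haD : a ≤ D) (hDa : D < a + s) :
    f.coeff a = 0 := by
  rw [h.homogEval_eq_sum] at hf
  simpa [haD] using Fintype.linearIndependent_iff.mp h.linearIndependent_monomial _ hf
    (⟨a, ha⟩, ⟨D - a, by omega⟩)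

section CharP

variable {p : ℕ} [Fact p.Prime] [CharP k p]

theorem add_pow_char_eq_zero (h : IsBicyclicVector A B v r s) (hr : r ≤ p) (hs : s ≤ p) :
    (A + B) ^ p = 0 := by
  have : Nontrivial V := ⟨_, _, h.socle_ne_zero⟩
  have : CharP (Module.End k V) p := charP_of_injective_algebraMap' k p
  rw [add_pow_char_of_commute p h.commute, pow_eq_zero_of_le hr h.pow_left,
    pow_eq_zero_of_le hs h.pow_right, add_zero]

theorem exists_short_string (h : IsBicyclicVector A B v r s) (hrs : r ≤ s) {j : ℕ} (hj : j < r)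
    (hjp : s + j ≤ p) :
    ∃ w : V, ((A + B) ^ (s - r + 2 * j + 1)) w = 0 ∧ ((A + B) ^ (s - r + 2 * j)) w ≠ 0 ∧
      ((A + B) ^ (s - r + 2 * j)) w ∈ LinearMap.range (homogEval A B v (s - 1 + j)) := by
  obtain ⟨f, hf0, hfdeg, hf⟩ :=
    exists_ne_zero_coeff_mul_eq_zero ((X + 1 : k[X]) ^ (s - r + 2 * j + 1)) (r - 1 - j) (j + 1)
  have hpow (n : ℕ) := add_pow_homogEval h.commute v hfdeg n
  refine ⟨homogEval A B v (r - 1 - j) f, ?_, fun hw => hf0 ?_, ?_⟩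
  · rw [hpow]
    refine h.homogEval_eq_zero fun a ha _ ha' => ?_
    simpa only [show a - (j + 1) + (j + 1) = a by omega] using hf (a - (j + 1)) (by omega)
  · rw [hpow] at hw
    refine eq_zero_of_coeff_X_add_one_pow_mul_eq_zero (n := s - r + 2 * j) (q := j)
      (cast_factorial_ne_zero (p := p) (by omega)) (by omega) hfdeg fun a ha => ?_
    exact h.coeff_eq_zero_of_homogEval_eq_zero hw (by omega) (by omega) (by omega)
  · rw [hpow, show s - r + 2 * j + (r - 1 - j) = s - 1 + j by omega]
    exact LinearMap.mem_range_self _ _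

theorem exists_long_string (h : IsBicyclicVector A B v r s) (hr : r ≤ p) (hs : s ≤ p) {i : ℕ}
    (hi : i + p < r + s) :
    ∃ w : V, ((A + B) ^ p) w = 0 ∧ ((A + B) ^ (p - 1)) w ≠ 0 ∧
      ((A + B) ^ (p - 1)) w ∈ LinearMap.range (homogEval A B v (i + (p - 1))) := by
  have hp := (Fact.out : p.Prime).pos
  have hpow := add_pow_homogEval h.commute v (natDegree_X_pow_le (R := k) i) (p - 1)
  refine ⟨homogEval A B v i (X ^ i), ?_, fun hw => ?_, ?_⟩
  · rw [h.add_pow_char_eq_zero hr hs, LinearMap.zero_apply]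
  · rw [hpow] at hw
    have hcoeff : ((X + 1) ^ (p - 1) * 1 : k[X]).coeff (r - 1 - i) = 0 := by
      have := h.coeff_eq_zero_of_homogEval_eq_zero hw (a := r - 1) (by omega) (by omega) (by omega)
      rwa [coeff_mul_X_pow', if_pos (by omega), ← mul_one (_ ^ (p - 1))] at this
    refine one_ne_zero (eq_zero_of_coeff_X_add_one_pow_mul_eq_zero (R := k) (n := p - 1)
      (q := r - 1 - i) (i := 0) (cast_factorial_ne_zero (p := p) (by omega)) (by omega)
      natDegree_one.le fun a ha => ?_)
    rwa [Nat.le_zero.mp ha, zero_add]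
  · rw [hpow, Nat.add_comm (p - 1)]
    exact LinearMap.mem_range_self _ _

end CharP

end IsBicyclicVector

section Decomposition

-- `c` and `m` are the numbers of short and of long Jordan blocks.
theorem add_eq_of_mul_add_mul_add_sq_eq_mul {p r s d c m : ℕ} (hp : 0 < p) (hrs : r ≤ s)
    (hs : s ≤ p) (hd : d = s - r) (hc : c = min r (p - s)) (hm : m * p + c * d + c ^ 2 = r * s) :
    c + m = r := by
  have hp0 : (p : ℤ) ≠ 0 := by exact_mod_cast hp.ne'
  zify [hrs] at hd hm ⊢
  refine mul_right_cancel₀ hp0 ?_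
  rcases le_total r (p - s) with hle | hle
  · rw [min_eq_left hle] at hc
    rw [hc, hd] at hm
    rw [hc]
    linear_combination hm
  · rw [min_eq_right hle] at hc
    zify [hs] at hc
    rw [hc, hd] at hm
    rw [hc]
    linear_combination hm

theorem sum_fin_add_two_mul_add_one (c d : ℕ) :
    ∑ j : Fin c, (d + 2 * (j : ℕ) + 1) = c * d + c ^ 2 := by
  rw [Fin.sum_univ_eq_sum_range fun j => d + 2 * j + 1]
  induction c with
  | zero => simp
  | succ c ih =>
    rw [sum_range_succ, ih]
    ring

theorem IsBicyclicVector.exists_equiv_sigmaL {k : Type} {V : Type*} [Field k] [AddCommGroup V]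
    [Module k V] {p : ℕ} [Fact p.Prime] [CharP k p] {A B : Module.End k V} {v : V} {r s : ℕ}
    (h : IsBicyclicVector A B v r s) (hrs : r ≤ s) (hs : s ≤ p) {d c m : ℕ} (hd : d = s - r)
    (hc : c = min r (p - s)) (hm : m * p + c * d + c ^ 2 = r * s) :
    ∃ e : V ≃ₗ[k] (∀ j : Fin c, Fin (d + 2 * (j : ℕ) + 1) → k) × (Fin m → Fin p → k),
      ∀ x, (∀ j, (e (x + (A + B) x)).1 j = sigmaL k (d + 2 * (j : ℕ) + 1) ((e x).1 j)) ∧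
        ∀ i, (e (x + (A + B) x)).2 i = sigmaL k p ((e x).2 i) := by
  have hcm := add_eq_of_mul_add_mul_add_sq_eq_mul (Fact.out : p.Prime).pos hrs hs hd hc hm
  let size : Fin c ⊕ Fin m → ℕ := Sum.elim (fun j => d + 2 * (j : ℕ) + 1) fun _ => p
  let degree : Fin c ⊕ Fin m → ℕ := Sum.elim (fun j => s - 1 + j) fun i => i + (p - 1)
  have hstring (x : Fin c ⊕ Fin m) : ∃ w : V, ((A + B) ^ size x) w = 0 ∧
      ((A + B) ^ (size x - 1)) w ≠ 0 ∧
      ((A + B) ^ (size x - 1)) w ∈ LinearMap.range (homogEval A B v (degree x)) := by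
    rcases x with j | i
    · simpa only [size, degree, Sum.elim_inl, hd, Nat.add_sub_cancel] using
        h.exists_short_string (p := p) hrs (by omega) (by omega)
    · exact h.exists_long_string (hrs.trans hs) hs (by omega)
  choose w hzero hne hmem using hstring
  have hdegree : Function.Injective degree := by
    have := h.symm.left_pos
    refine Function.Injective.sumElim ?_ ?_ ?_
    · exact fun a b hab => Fin.ext (Nat.add_left_cancel hab)
    · exact fun a b hab => Fin.ext (Nat.add_right_cancel hab)
    · intro a b
      omega
  have hfin : FiniteDimensional k V := .of_finrank_pos <| by
    rw [h.finrank_eq]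
    exact Nat.mul_pos h.left_pos h.symm.left_pos
  have hdim : Module.finrank k V = ∑ x, size x := by
    simp only [h.finrank_eq, ← hm, Fintype.sum_sum_type, size, Sum.elim_inl, Sum.elim_inr,
      sum_fin_add_two_mul_add_one, sum_const, card_univ, Fintype.card_fin, smul_eq_mul]
    ring
  obtain ⟨e, he⟩ := exists_equiv_pi_sigmaL (A + B) size w hzero
    (h.linearIndependent_of_mem_range_homogEval hdegree hmem hne) hdim
  exact ⟨e.trans (LinearEquiv.sumPiEquivProdPi k (Fin c) (Fin m) fun x => Fin (size x) → k),
    fun x => ⟨fun j => he x (.inl j), fun i => he x (.inr i)⟩⟩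

end Decomposition

section Tensor

theorem map_one_add_one_add {R U W : Type*} [CommSemiring R] [AddCommMonoid U] [Module R U]
    [AddCommMonoid W] [Module R W] (a : Module.End R U) (b : Module.End R W) :
    TensorProduct.map (1 + a) (1 + b) =
      1 + (TensorProduct.map a 1 + TensorProduct.map (1 + a) b) := by
  rw [TensorProduct.map_add_right, TensorProduct.map_add_left, TensorProduct.map_one, add_assoc]

variable {k U W : Type*} [Field k] [AddCommGroup U] [Module k U] [AddCommGroup W] [Module k W]

theorem tmul_ne_zero {u : U} {w : W} (hu : u ≠ 0) (hw : w ≠ 0) : u ⊗ₜ[k] w ≠ 0 :=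
  have hu' := LinearIndependent.of_subsingleton (R := k) (v := fun _ : Unit => u) () hu
  have hw' := LinearIndependent.of_subsingleton (R := k) (v := fun _ : Unit => w) () hw
  (hu'.tmul_of_isDomain hw').ne_zero ((), ())

theorem isBicyclicVector_tmul {a : Module.End k U} {b : Module.End k W} {u : U} {w : W} {r s : ℕ}
    (har : a ^ r = 0) (hbs : b ^ s = 0) (hu : (a ^ (r - 1)) u ≠ 0) (hw : (b ^ (s - 1)) w ≠ 0)
    (hU : Module.finrank k U = r) (hW : Module.finrank k W = s) :
    IsBicyclicVector (TensorProduct.map a (1 : Module.End k W)) (TensorProduct.map (1 + a) b)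
      (u ⊗ₜ[k] w) r s where
  commute := by
    rw [Commute, SemiconjBy, ← TensorProduct.map_mul, ← TensorProduct.map_mul, one_mul, mul_one,
      mul_add, add_mul, one_mul, mul_one]
  pow_left := by rw [TensorProduct.map_pow, har, TensorProduct.map_zero_left]
  pow_right := by rw [TensorProduct.map_pow, hbs, TensorProduct.map_zero_right]
  socle_ne_zero := by
    have hshift : a ^ (r - 1) * a = 0 := by
      rw [← pow_succ]
      exact pow_eq_zero_of_le (by omega) har
    have hsemiconj : SemiconjBy (a ^ (r - 1)) (1 + a) 1 := by
      rw [SemiconjBy, mul_add, hshift, mul_one, one_mul, add_zero]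
    have hfix : a ^ (r - 1) * (1 + a) ^ (s - 1) = a ^ (r - 1) := by
      rw [(hsemiconj.pow_right (s - 1)).eq, one_pow, one_mul]
    rw [TensorProduct.map_pow, TensorProduct.map_pow, ← TensorProduct.map_mul, hfix, one_pow,
      one_mul, TensorProduct.map_tmul]
    exact tmul_ne_zero hu hw
  finrank_eq := by rw [Module.finrank_tensorProduct, hU, hW]

end Tensor

theorem stmt5_general (p : ℕ) (hp : p.Prime) (k : Type) [Field k] [CharP k p]
    (r s : ℕ) (hr1 : 1 ≤ r) (hr2 : r ≤ p) (hs1 : 1 ≤ s) (hs2 : s ≤ p)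
    (d c m : ℕ) (hd : d = max r s - min r s)
    (hc : c = min (min r s) (min (p - r) (p - s)))
    (hm : (m : ℤ) * p = r * s - c * d - c ^ 2) :
    ∃ e : TensorProduct k (Fin r → k) (Fin s → k) ≃ₗ[k]
        ((∀ i : Fin c, Fin (d + 2 * (i : ℕ) + 1) → k) × (Fin m → Fin p → k)),
      ∀ x, e (TensorProduct.map (sigmaL k r) (sigmaL k s) x) =
        (LinearMap.prodMap
          (LinearMap.pi fun i : Fin c =>
            (sigmaL k (d + 2 * (i : ℕ) + 1)) ∘ₗ LinearMap.proj i)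
          (LinearMap.pi fun j : Fin m => (sigmaL k p) ∘ₗ LinearMap.proj j)) (e x) := by
  have : Fact p.Prime := ⟨hp⟩
  obtain ⟨u, hu⟩ := exists_mulVecLin_jordanN_pow_apply_ne_zero k r hr1
  obtain ⟨w, hw⟩ := exists_mulVecLin_jordanN_pow_apply_ne_zero k s hs1
  have hAB := isBicyclicVector_tmul (mulVecLin_jordanN_pow_self k r)
    (mulVecLin_jordanN_pow_self k s) hu hw (Module.finrank_fin_fun k) (Module.finrank_fin_fun k)
  have hm' : m * p + c * d + c ^ 2 = r * s := by
    zify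
    linear_combination hm
  rw [sigmaL_eq_one_add k r, sigmaL_eq_one_add k s, map_one_add_one_add]
  rcases le_total r s with hrs | hsr
  · obtain ⟨e, he⟩ := hAB.exists_equiv_sigmaL hrs hs2 (d := d) (c := c) (by omega) (by omega) hm'
    exact ⟨e, fun x => Prod.ext (funext (he x).1) (funext (he x).2)⟩
  · obtain ⟨e, he⟩ := hAB.symm.exists_equiv_sigmaL hsr hr2 (d := d) (c := c) (by omega) (by omega)
      (hm'.trans (mul_comm r s))
    rw [add_comm (TensorProduct.map _ 1)]
    exact ⟨e, fun x => Prod.ext (funext (he x).1) (funext (he x).2)⟩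

/-- Over an algebraically closed field of characteristic `p > 0`,
for `1 ≤ r, s ≤ p − 1`, with `d = |r − s|`, `c = min(r, s, p−r, p−s)` and
`m = (r·s − c·|r−s| − c²)/p`, there is an isomorphism of representations of `C_p`:
`L_r ⊗ L_s ≅ (⨁_{i=1}^{c} L_{|r−s|+2i−1}) ⊕ (L_p)^{⊕m}`.
(Here the `i`-th factor, `0 ≤ i < c`, has size `d + 2i + 1 = |r−s| + 2(i+1) − 1`.) -/
theorem stmt5 (p : ℕ) (hp : p.Prime) (k : Type) [Field k] [IsAlgClosed k] [CharP k p]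
    (r s : ℕ) (hr1 : 1 ≤ r) (hr2 : r ≤ p - 1) (hs1 : 1 ≤ s) (hs2 : s ≤ p - 1)
    (d c m : ℕ) (hd : d = max r s - min r s)
    (hc : c = min (min r s) (min (p - r) (p - s)))
    (hm : (m : ℤ) * p = r * s - c * d - c ^ 2) :
    ∃ e : TensorProduct k (Fin r → k) (Fin s → k) ≃ₗ[k]
        ((∀ i : Fin c, Fin (d + 2 * (i : ℕ) + 1) → k) × (Fin m → Fin p → k)),
      ∀ x, e (TensorProduct.map (sigmaL k r) (sigmaL k s) x) =
        (LinearMap.prodMap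
          (LinearMap.pi fun i : Fin c =>
            (sigmaL k (d + 2 * (i : ℕ) + 1)) ∘ₗ LinearMap.proj i)
          (LinearMap.pi fun j : Fin m => (sigmaL k p) ∘ₗ LinearMap.proj j)) (e x) :=
  stmt5_general p hp k r s hr1 (by omega) hs1 (by omega) d c m hd hc hm
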